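/- arXiv:2311.10262 — 5 statements merged into one kernel-verified Lean document; each statement's English description precedes it below -/
import Mathlib

section
/- There exists C > 0 such that for every word w with letters in {1,2,3} whose last two letters are different, the 2-dimensional Hausdorff measure (area) of the triangle conv{x,y,z} ⊂ ℝ³, where x = A_w e_1/ω(A_w e_1), y = A_w e_2/ω(A_w e_2), z = A_w e_3/ω(A_w e_3) and ω(v) = v1+v2+v3, satisfies Area(conv{x,y,z}) ≤ C · σ1(A_w)^{−3}. -/
/-!
Write `t j` for the `j`-th column sum of `A_w`. The triangle lies in the plane `x₀ + x₁ + x₂ = 1`,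
so it is the image of a planar triangle under a Lipschitz chart (`planeChart`), and its
`μH[2]`-measure is at most a constant times the determinant of the matrix with columns `x, y, z`
(`hausdorff_triangle_le`), which is `det A_w / (t 0 * t 1 * t 2) = 1 / (t 0 * t 1 * t 2)`.

It remains to see that every `t j` is comparable to `σ₁(A_w)`. Since the entries of `A_w` are
nonnegative, `σ₁(A_w) ≤ t 0 + t 1 + t 2` (`sval1_le_sum`). The column sums of every word satisfy the
triangle inequalities `t i ≤ t j + t k`, because right multiplication by a generator preserves them
(`Good.mul`). If the last two letters of `w = u a b` differ, each column sum of `A_w` is at least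
the sum of two column sums of `A_u`, hence at least half of their total, while the total for `A_w`
is at most six times the total for `A_u` (`sum_le_twelve_mul`).
-/


open Matrix MeasureTheory

noncomputable section

abbrev M3 := Matrix (Fin 3) (Fin 3) ℝ
abbrev E3 := EuclideanSpace ℝ (Fin 3)

/-- The Rauzy generators. -/
def A : Fin 3 → M3
  | 0 => !![1,1,1; 0,1,0; 0,0,1]
  | 1 => !![1,0,0; 1,1,1; 0,0,1]
  | 2 => !![1,0,0; 0,1,0; 1,1,1]

/-- Product of the matrices along a word. -/
def Aw (w : List (Fin 3)) : M3 := (w.map A).prod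

/-- Euclidean norm of a vector in `ℝ³`. -/
def enorm3 (v : Fin 3 → ℝ) : ℝ := Real.sqrt (v 0 ^ 2 + v 1 ^ 2 + v 2 ^ 2)

/-- Largest singular value = `ℓ²` operator norm. -/
def sval1 (g : M3) : ℝ := ‖(Matrix.toEuclideanLin g).toContinuousLinearMap‖

/-- Smallest singular value (for invertible `g`): `σ₃(g) = σ₁(g⁻¹)⁻¹`. -/
def sval3 (g : M3) : ℝ := (sval1 g⁻¹)⁻¹

/-- Middle singular value (for invertible `g`): `σ₂ = |det g|·σ₁(g⁻¹)/σ₁(g)`. -/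
def sval2 (g : M3) : ℝ := |g.det| * sval1 g⁻¹ / sval1 g

def basis3 (i : Fin 3) : Fin 3 → ℝ := Pi.single i 1

def omega3 (v : Fin 3 → ℝ) : ℝ := v 0 + v 1 + v 2

def ofE : E3 → (Fin 3 → ℝ) := WithLp.equiv 2 (Fin 3 → ℝ)
def toE : (Fin 3 → ℝ) → E3 := (WithLp.equiv 2 (Fin 3 → ℝ)).symm

/-- The standard 2-simplex in `ℝ³` (with the Euclidean metric). -/
def simplex : Set E3 := {x | (∀ i, 0 ≤ ofE x i) ∧ omega3 (ofE x) = 1}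

/-- The projective action of the word `w` on the simplex. -/
def fmap (w : List (Fin 3)) (x : E3) : E3 :=
  toE ((omega3 ((Aw w) *ᵥ ofE x))⁻¹ • ((Aw w) *ᵥ ofE x))

/-- The Rauzy gasket. -/
def gasket : Set E3 :=
  ⋂ n : ℕ, ⋃ w ∈ {w : List (Fin 3) | w.length = n + 1}, fmap w '' simplex

/-- Falconer's singular value function. -/
def phi (s : ℝ) (g : M3) : ℝ :=
  if s ≤ 1 then (sval2 g / sval1 g) ^ s
  else (sval2 g / sval1 g) * (sval3 g / sval1 g) ^ (s - 1)

/-- The affinity exponent of the Rauzy semigroup. -/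
def sA : ℝ :=
  sSup {s : ℝ | s ∈ Set.Ioc (0:ℝ) 2 ∧
    ¬ Summable fun w : {w : List (Fin 3) // w ≠ []} => phi s (Aw w.1)}

/-- A word has its last `k` letters not all the same. -/
def LastNotAllSame (w : List (Fin 3)) (k : ℕ) : Prop :=
  k ≤ w.length ∧ ¬ ∃ c, ∀ x ∈ w.drop (w.length - k), x = c

/-- A word's last two letters are different. -/
def LastTwoDiff (w : List (Fin 3)) : Prop :=
  ∃ u a b, w = u ++ [a, b] ∧ a ≠ b

/-- The Cartan projection `κ(g) = (log σ₁, log σ₂, log σ₃)`. -/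
def kappa (g : M3) : Fin 3 → ℝ :=
  ![Real.log (sval1 g), Real.log (sval2 g), Real.log (sval3 g)]

/-- The linear functional `ψ_s` on the Cartan algebra. -/
def psi (s : ℝ) (lam : Fin 3 → ℝ) : ℝ := (lam 0 - lam 1) + (s - 1) * (lam 0 - lam 2)

end


open scoped NNReal ENNReal

/-- The sum of the entries of column `j`. -/
def colSum (M : M3) (j : Fin 3) : ℝ := M 0 j + M 1 j + M 2 j

/-- The properties shared by all products of generators: nonnegative entries, determinant `1`, and
column sums that satisfy the triangle inequalities. -/
structure Good (M : M3) : Prop where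
  nonneg : ∀ i j, 0 ≤ M i j
  det : M.det = 1
  tri0 : colSum M 0 ≤ colSum M 1 + colSum M 2
  tri1 : colSum M 1 ≤ colSum M 0 + colSum M 2
  tri2 : colSum M 2 ≤ colSum M 0 + colSum M 1

/-- Right multiplication by `A a` adds the column sum of index `a` to the two others. -/
lemma colSum_mul_A (M : M3) (a j : Fin 3) :
    colSum (M * A a) j = if j = a then colSum M j else colSum M a + colSum M j := by
  fin_cases a <;> fin_cases j <;>
    simp [colSum, A, Matrix.mul_apply, Fin.sum_univ_three] <;> ring

lemma A_nonneg (a i j : Fin 3) : 0 ≤ A a i j := by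
  fin_cases a <;> fin_cases i <;> fin_cases j <;> simp [A]

lemma det_A (a : Fin 3) : (A a).det = 1 := by
  fin_cases a <;> simp [A, Matrix.det_fin_three]

lemma Good.colSum_nonneg {M : M3} (h : Good M) (j : Fin 3) : 0 ≤ colSum M j :=
  add_nonneg (add_nonneg (h.nonneg 0 j) (h.nonneg 1 j)) (h.nonneg 2 j)

lemma Good.mul {M : M3} (h : Good M) (a : Fin 3) : Good (M * A a) := by
  have h0 := h.colSum_nonneg 0
  have h1 := h.colSum_nonneg 1
  have h2 := h.colSum_nonneg 2
  have t0 := h.tri0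
  have t1 := h.tri1
  have t2 := h.tri2
  refine ⟨fun i j => ?_, by rw [Matrix.det_mul, h.det, det_A, one_mul], ?_, ?_, ?_⟩
  · rw [Matrix.mul_apply]
    exact Finset.sum_nonneg fun k _ => mul_nonneg (h.nonneg i k) (A_nonneg a k j)
  all_goals
    simp only [colSum_mul_A]
    fin_cases a <;> simp <;> linarith

lemma Aw_append (u : List (Fin 3)) (a : Fin 3) : Aw (u ++ [a]) = Aw u * A a := by
  simp [Aw]

lemma good_Aw (w : List (Fin 3)) : Good (Aw w) := by
  induction w using List.reverseRecOn with
  | nil =>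
    refine ⟨fun i j => ?_, by simp [Aw], ?_, ?_, ?_⟩
    · simp only [Aw, List.map_nil, List.prod_nil, Matrix.one_apply]
      split_ifs <;> norm_num
    all_goals simp [Aw, colSum]
  | append_singleton u a ih => rw [Aw_append]; exact ih.mul a

lemma sum_le_twelve_mul {M : M3} (h : Good M) {a b : Fin 3} (hab : a ≠ b) (j : Fin 3) :
    colSum (M * A a * A b) 0 + colSum (M * A a * A b) 1 + colSum (M * A a * A b) 2
      ≤ 12 * colSum (M * A a * A b) j := by
  have h0 := h.colSum_nonneg 0
  have h1 := h.colSum_nonneg 1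
  have h2 := h.colSum_nonneg 2
  have t0 := h.tri0
  have t1 := h.tri1
  have t2 := h.tri2
  simp only [colSum_mul_A]
  fin_cases a <;> fin_cases b <;> fin_cases j <;> simp at hab ⊢ <;> linarith

lemma sval1_le_sum {M : M3} (h : ∀ i j, 0 ≤ M i j) :
    sval1 M ≤ colSum M 0 + colSum M 1 + colSum M 2 := by
  have hS : ∀ i, 0 ≤ M i 0 + M i 1 + M i 2 := fun i =>
    add_nonneg (add_nonneg (h i 0) (h i 1)) (h i 2)
  have hc : ∀ j, 0 ≤ colSum M j := fun j =>
    add_nonneg (add_nonneg (h 0 j) (h 1 j)) (h 2 j)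
  unfold sval1
  refine ContinuousLinearMap.opNorm_le_bound _ (by linarith [hc 0, hc 1, hc 2]) fun v => ?_
  have hv : ∀ j, |v j| ≤ ‖v‖ := fun j => PiLp.norm_apply_le v j
  have hrow : ∀ i, |M i 0 * v 0 + M i 1 * v 1 + M i 2 * v 2|
      ≤ (M i 0 + M i 1 + M i 2) * ‖v‖ := by
    intro i
    have key : ∀ j, |M i j * v j| ≤ M i j * ‖v‖ := fun j => by
      rw [abs_mul, abs_of_nonneg (h i j)]
      exact mul_le_mul_of_nonneg_left (hv j) (h i j)
    have := abs_add_three (M i 0 * v 0) (M i 1 * v 1) (M i 2 * v 2)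
    linarith [key 0, key 1, key 2]
  have hn := norm_nonneg v
  rw [EuclideanSpace.norm_eq]
  refine Real.sqrt_le_iff.2 ⟨mul_nonneg (by linarith [hc 0, hc 1, hc 2]) hn, ?_⟩
  have hsq : ∀ i, (M i 0 * v 0 + M i 1 * v 1 + M i 2 * v 2) ^ 2
      ≤ ((M i 0 + M i 1 + M i 2) * ‖v‖) ^ 2 := fun i =>
    sq_le_sq' (abs_le.1 (hrow i)).1 (abs_le.1 (hrow i)).2
  have hp : ∀ i, 0 ≤ (M i 0 + M i 1 + M i 2) * ‖v‖ := fun i => mul_nonneg (hS i) hn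
  have e : (colSum M 0 + colSum M 1 + colSum M 2) * ‖v‖ =
      (M 0 0 + M 0 1 + M 0 2) * ‖v‖ + (M 1 0 + M 1 1 + M 1 2) * ‖v‖
        + (M 2 0 + M 2 1 + M 2 2) * ‖v‖ := by
    simp only [colSum]; ring
  rw [e]
  simp only [Fin.sum_univ_three, Real.norm_eq_abs, sq_abs, LinearMap.coe_toContinuousLinearMap',
    Matrix.toLpLin_apply, Matrix.mulVec, dotProduct]
  nlinarith [hsq 0, hsq 1, hsq 2, mul_nonneg (hp 0) (hp 1), mul_nonneg (hp 0) (hp 2),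
    mul_nonneg (hp 1) (hp 2)]

lemma sval1_pos {M : M3} (h : M.det = 1) : 0 < sval1 M := by
  unfold sval1
  rw [norm_pos_iff]
  intro h0
  have : M = 0 := by simpa using h0
  simp [this] at h

/-- The affine chart `(a, b) ↦ (a, b, 1 - a - b)` of the plane `x₀ + x₁ + x₂ = 1`. -/
def planeChart (p : Fin 2 → ℝ) : E3 := toE ![p 0, p 1, 1 - p 0 - p 1]

/-- The source carries the sup norm, for which `μH[2]` is Lebesgue measure. -/
lemma lipschitz_planeChart : LipschitzWith 3 planeChart := by
  refine LipschitzWith.of_dist_le_mul fun p q => ?_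
  have h0 := dist_le_pi_dist p q 0
  have h1 := dist_le_pi_dist p q 1
  have hd : 0 ≤ dist p q := dist_nonneg
  rw [Real.dist_eq] at h0 h1
  rw [EuclideanSpace.dist_eq]
  refine Real.sqrt_le_iff.2 ⟨by positivity, ?_⟩
  simp only [Fin.sum_univ_three, Real.dist_eq, sq_abs, planeChart, toE,
    WithLp.equiv_symm_apply, NNReal.coe_ofNat]
  simp
  have k0 := sq_le_sq' (abs_le.1 h0).1 (abs_le.1 h0).2
  have k1 := sq_le_sq' (abs_le.1 h1).1 (abs_le.1 h1).2
  nlinarith [sq_nonneg ((p 0 - q 0) - (p 1 - q 1))]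

/-- The edge vectors at `z` of the projected triangle, as columns. -/
def edgeMatrix (x y z : Fin 3 → ℝ) : Matrix (Fin 2) (Fin 2) ℝ :=
  !![x 0 - z 0, y 0 - z 0; x 1 - z 1, y 1 - z 1]

lemma convexHull_subset (x y z : Fin 3 → ℝ) (hx : omega3 x = 1) (hy : omega3 y = 1)
    (hz : omega3 z = 1) :
    convexHull ℝ {toE x, toE y, toE z} ⊆
      planeChart '' ((fun p => ![z 0, z 1] + p) ''
        (Matrix.toLin' (edgeMatrix x y z) '' Set.Icc 0 1)) := by
  unfold omega3 at hx hy hz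
  have hx2 : x 2 = 1 - x 0 - x 1 := by linarith
  have hy2 : y 2 = 1 - y 0 - y 1 := by linarith
  have hz2 : z 2 = 1 - z 0 - z 1 := by linarith
  have key : ∀ v : E3, ∀ a b : ℝ, 0 ≤ a → a ≤ 1 → 0 ≤ b → b ≤ 1 →
      (∀ i, v i = z i + a * (x i - z i) + b * (y i - z i)) →
      v ∈ planeChart '' ((fun p => ![z 0, z 1] + p) ''
        (Matrix.toLin' (edgeMatrix x y z) '' Set.Icc 0 1)) := by
    intro v a b ha ha' hb hb' hv
    refine ⟨_, ⟨_, ⟨![a, b], ⟨?_, ?_⟩, rfl⟩, rfl⟩, ?_⟩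
    · intro i; fin_cases i <;> simpa
    · intro i; fin_cases i <;> simpa
    · ext i
      have := hv i
      fin_cases i <;>
        simp [planeChart, toE, edgeMatrix] at this ⊢ <;>
        rw [this] <;> (try rw [hx2, hy2, hz2]) <;> ring
  intro v hv
  rw [convexHull_insert (by simp), convexHull_pair] at hv
  simp only [mem_convexJoin, Set.mem_singleton_iff, exists_eq_left] at hv
  obtain ⟨q, ⟨c, d, hc, hd, hcd, rfl⟩, ⟨a, b, ha, hb, hab, rfl⟩⟩ := hv
  have hd1 : d = 1 - c := by linarith
  have ha1 : a = 1 - b := by linarith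
  refine key _ a (b * c) ha (by linarith) (by positivity) (by nlinarith) fun i => ?_
  simp [toE]
  subst hd1 ha1
  ring

lemma hausdorff_triangle_le (x y z : Fin 3 → ℝ) (hx : omega3 x = 1) (hy : omega3 y = 1)
    (hz : omega3 z = 1) :
    μH[2] (convexHull ℝ {toE x, toE y, toE z}) ≤
      ENNReal.ofReal (9 * |(edgeMatrix x y z).det|) := by
  have hvol : (μH[2] : Measure (Fin 2 → ℝ)) = volume := by
    have := hausdorffMeasure_pi_real (ι := Fin 2)
    simpa using this
  refine (measure_mono (convexHull_subset x y z hx hy hz)).trans ?_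
  refine (lipschitz_planeChart.hausdorffMeasure_image_le (by norm_num) _).trans ?_
  rw [hvol, Set.image_add_left, measure_preimage_add, Measure.addHaar_image_linearMap,
    Real.volume_Icc_pi, LinearMap.det_toLin', ENNReal.ofReal_mul (by norm_num)]
  simp
  norm_num

/-- Normalizing the columns divides the determinant by the product of the column sums. -/
lemma edgeMatrix_det (M : M3) (h0 : colSum M 0 ≠ 0) (h1 : colSum M 1 ≠ 0) (h2 : colSum M 2 ≠ 0) :
    (edgeMatrix (fun i => (colSum M 0)⁻¹ * M i 0) (fun i => (colSum M 1)⁻¹ * M i 1)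
      (fun i => (colSum M 2)⁻¹ * M i 2)).det =
      M.det / (colSum M 0 * colSum M 1 * colSum M 2) := by
  simp only [edgeMatrix, Matrix.det_fin_two_of, Matrix.det_fin_three]
  field_simp
  simp only [colSum]
  ring

/-- Area bound on image triangles: if the last two letters of `w` differ, the area of the
triangle with vertices `A_w e_i / ω(A_w e_i)` is at most `C σ₁(A_w)⁻³`. -/
theorem area_image_triangle_le :
    ∃ C > (0:ℝ), ∀ w : List (Fin 3), LastTwoDiff w →
      μH[2] (convexHull ℝ
          {toE ((omega3 (Aw w *ᵥ basis3 0))⁻¹ • (Aw w *ᵥ basis3 0)),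
           toE ((omega3 (Aw w *ᵥ basis3 1))⁻¹ • (Aw w *ᵥ basis3 1)),
           toE ((omega3 (Aw w *ᵥ basis3 2))⁻¹ • (Aw w *ᵥ basis3 2))}) ≤
        ENNReal.ofReal (C / sval1 (Aw w) ^ 3) := by
  refine ⟨9 * 12 ^ 3, by norm_num, ?_⟩
  rintro w ⟨u, a, b, rfl, hab⟩
  have hw : Aw (u ++ [a, b]) = Aw u * A a * A b := by
    rw [← Aw_append, ← Aw_append]; simp
  rw [hw]
  have hg : Good (Aw u * A a * A b) := ((good_Aw u).mul a).mul b
  have hle := sval1_le_sum hg.nonneg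
  have hpos := sval1_pos hg.det
  have ht := sum_le_twelve_mul (good_Aw u) hab
  generalize Aw u * A a * A b = M at *
  have hs : ∀ j, sval1 M ≤ 12 * colSum M j := fun j => hle.trans (ht j)
  have hc : ∀ j, 0 < colSum M j := fun j => by linarith [hs j]
  have hom : ∀ j, omega3 (M *ᵥ basis3 j) = colSum M j := fun j => by
    simp [omega3, basis3, colSum]
  have hcol : ∀ j, (omega3 (M *ᵥ basis3 j))⁻¹ • (M *ᵥ basis3 j)
      = fun i => (colSum M j)⁻¹ * M i j := fun j => by
    rw [hom]; ext i; simp [basis3]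
  have hone : ∀ j, omega3 (fun i => (colSum M j)⁻¹ * M i j) = 1 := fun j => by
    have := (hc j).ne'
    simp only [omega3, ← mul_add]
    exact inv_mul_cancel₀ this
  rw [hcol, hcol, hcol]
  refine (hausdorff_triangle_le _ _ _ (hone 0) (hone 1) (hone 2)).trans ?_
  apply ENNReal.ofReal_le_ofReal
  have hP : 0 < colSum M 0 * colSum M 1 * colSum M 2 :=
    mul_pos (mul_pos (hc 0) (hc 1)) (hc 2)
  rw [edgeMatrix_det M (hc 0).ne' (hc 1).ne' (hc 2).ne', hg.det,
    abs_of_pos (one_div_pos.2 hP), mul_one_div, div_le_div_iff₀ hP (pow_pos hpos 3)]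
  have hcube : sval1 M ^ 3 ≤ (12 * colSum M 0) * (12 * colSum M 1) * (12 * colSum M 2) := by
    rw [pow_three']
    have := hc 0
    have := hc 1
    gcongr
    · exact hs 0
    · exact hs 1
    · exact hs 2
  nlinarith [hcube]
end

section
/- There exists ε > 0 such that for every word w with letters in {1,2} (only the letters 1 and 2 are used) whose last two letters are different, one has both σ2(A_w) ≥ ε and ‖A_w e_1‖ · ‖A_w e_2‖ ≥ ε · σ1(A_w)²; equivalently, since ‖A_w e_1 ∧ A_w e_2‖ = 1, the projective length of the arc A_w I satisfies ε·|A_w I| ≤ σ1(A_w)^{−2}, where I is the projective segment between E_1 = ℝe_1 and E_2 = ℝe_2. -/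
/-! For a word in the letters `1, 2` the matrix `A_w` is upper block triangular, its
`2 × 2` block `(a b; c d)` is a non-negative matrix of determinant one, and `A_w` fixes the vector
`e₁ + e₂ - e₃`. Hence the third column is `c₁ + c₂ - e₁ - e₂ + e₃`, where `c₁, c₂` are the first two
columns, and with `N = a² + b² + c² + d²` this gives `σ₁(A_w)² ≤ 5 N`
(`two_letter_sval1_sq_le`).

The inverse contains the entries `d, -b, -c, a`, so `σ₁(A_w⁻¹)² ≥ N / 2`, which bounds
`σ₂ = σ₁(A_w⁻¹) / σ₁(A_w)` from below. If the last two letters differ, then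
`(c₁, c₂) = (2x + y, x + y)` or `(x + y, x + 2y)` with `x, y` non-negative vectors, so the
norms of `c₁` and `c₂` are comparable and `‖c₁‖ ‖c₂‖ ≥ N / 4`. -/

open Matrix MeasureTheory

/-- The common shape of the matrices `A_w`, `w` a word in the first two letters: the upper left
block is `(a b; c d)`, and the third column is determined by `e₁ + e₂ - e₃` being fixed. -/
def twoLetterMat (a b c d : ℝ) : M3 := !![a, b, a + b - 1; c, d, c + d - 1; 0, 0, 1]

lemma twoLetterMat_mul_A_zero (a b c d : ℝ) :
    twoLetterMat a b c d * A 0 = twoLetterMat a (a + b) c (c + d) := by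
  ext i j
  fin_cases i <;> fin_cases j <;>
    simp [twoLetterMat, A, Matrix.mul_apply, Fin.sum_univ_three] <;> ring

lemma twoLetterMat_mul_A_one (a b c d : ℝ) :
    twoLetterMat a b c d * A 1 = twoLetterMat (a + b) b (c + d) d := by
  ext i j
  fin_cases i <;> fin_cases j <;>
    simp [twoLetterMat, A, Matrix.mul_apply, Fin.sum_univ_three] <;> ring

lemma exists_Aw_eq_twoLetterMat (w : List (Fin 3)) (hw : ∀ i ∈ w, i ≠ 2) :
    ∃ a b c d : ℝ, 0 ≤ a ∧ 0 ≤ b ∧ 0 ≤ c ∧ 0 ≤ d ∧ a * d - b * c = 1 ∧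
      Aw w = twoLetterMat a b c d := by
  induction w using List.reverseRecOn with
  | nil =>
    refine ⟨1, 0, 0, 1, by norm_num, by norm_num, by norm_num, by norm_num, by norm_num, ?_⟩
    ext i j
    fin_cases i <;> fin_cases j <;> simp [Aw, twoLetterMat]
  | append_singleton u x ih =>
    obtain ⟨a, b, c, d, ha, hb, hc, hd, hdet, hu⟩ := ih fun i hi => hw i (by simp [hi])
    have hx : x ≠ 2 := hw x (by simp)
    have hmul : Aw (u ++ [x]) = twoLetterMat a b c d * A x := by rw [← hu]; simp [Aw]
    rw [hmul]
    fin_cases x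
    · exact ⟨a, a + b, c, c + d, by positivity, by positivity, by positivity, by positivity,
        by linarith, twoLetterMat_mul_A_zero a b c d⟩
    · exact ⟨a + b, b, c + d, d, by positivity, by positivity, by positivity, by positivity,
        by linarith, twoLetterMat_mul_A_one a b c d⟩
    · exact absurd rfl hx

/-- If the last two letters differ, then the first two columns of `A_w` agree entrywise up to
a factor of two. -/
lemma exists_Aw_eq_of_lastTwoDiff (w : List (Fin 3)) (hw : ∀ i ∈ w, i ≠ 2)
    (hlast : LastTwoDiff w) :
    ∃ a b c d : ℝ, 0 ≤ a ∧ 0 ≤ b ∧ 0 ≤ c ∧ 0 ≤ d ∧ a * d - b * c = 1 ∧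
      a ≤ 2 * b ∧ b ≤ 2 * a ∧ c ≤ 2 * d ∧ d ≤ 2 * c ∧ Aw w = twoLetterMat a b c d := by
  obtain ⟨u, x, y, rfl, hxy⟩ := hlast
  obtain ⟨a, b, c, d, ha, hb, hc, hd, hdet, hu⟩ :=
    exists_Aw_eq_twoLetterMat u fun i hi => hw i (by simp [hi])
  have hx : x ≠ 2 := hw x (by simp)
  have hy : y ≠ 2 := hw y (by simp)
  have hmul : Aw (u ++ [x, y]) = twoLetterMat a b c d * A x * A y := by
    rw [← hu]; simp [Aw, Matrix.mul_assoc]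
  rw [hmul]
  have hcases : (x = 0 ∧ y = 1) ∨ (x = 1 ∧ y = 0) := by omega
  rcases hcases with ⟨rfl, rfl⟩ | ⟨rfl, rfl⟩
  · rw [twoLetterMat_mul_A_zero, twoLetterMat_mul_A_one]
    exact ⟨_, _, _, _, by positivity, by positivity, by positivity, by positivity,
      by linarith, by linarith, by linarith, by linarith, by linarith, rfl⟩
  · rw [twoLetterMat_mul_A_one, twoLetterMat_mul_A_zero]
    exact ⟨_, _, _, _, by positivity, by positivity, by positivity, by positivity,
      by linarith, by linarith, by linarith, by linarith, by linarith, rfl⟩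

/-- The operator norm is at most the Frobenius norm. -/
lemma sval1_sq_le (g : M3) : sval1 g ^ 2 ≤ ∑ i, ∑ j, g i j ^ 2 := by
  have hF : 0 ≤ ∑ i, ∑ j, g i j ^ 2 := by positivity
  have hle : sval1 g ≤ Real.sqrt (∑ i, ∑ j, g i j ^ 2) := by
    refine ContinuousLinearMap.opNorm_le_bound _ (Real.sqrt_nonneg _) fun x => ?_
    rw [EuclideanSpace.norm_eq, EuclideanSpace.norm_eq, ← Real.sqrt_mul hF, Finset.sum_mul]
    refine Real.sqrt_le_sqrt (Finset.sum_le_sum fun i _ => ?_)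
    have hcs := Finset.sum_mul_sq_le_sq_mul_sq Finset.univ (fun j => g i j) (fun j => x j)
    simpa [Matrix.mulVec, dotProduct] using hcs
  have h0 : 0 ≤ sval1 g := norm_nonneg _
  calc sval1 g ^ 2 ≤ Real.sqrt (∑ i, ∑ j, g i j ^ 2) ^ 2 := by gcongr
    _ = _ := Real.sq_sqrt hF

/-- Each column of a matrix has Euclidean norm at most the operator norm. -/
lemma sum_sq_column_le_sval1_sq (g : M3) (j : Fin 3) : ∑ i, g i j ^ 2 ≤ sval1 g ^ 2 := by
  have h := (Matrix.toEuclideanLin g).toContinuousLinearMap.le_opNorm (EuclideanSpace.single j 1)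
  have h1 : ‖(Matrix.toEuclideanLin g).toContinuousLinearMap (EuclideanSpace.single j 1)‖
      ≤ sval1 g := by simpa [sval1] using h
  have h2 : ‖(Matrix.toEuclideanLin g).toContinuousLinearMap (EuclideanSpace.single j 1)‖ ^ 2
      = ∑ i, g i j ^ 2 := by
    rw [EuclideanSpace.norm_sq_eq]
    simp [Matrix.toLpLin_apply]
  rw [← h2]
  gcongr

lemma two_letter_sval1_sq_le {a b c d : ℝ} (ha : 0 ≤ a) (hb : 0 ≤ b) (hc : 0 ≤ c) (hd : 0 ≤ d)
    (hdet : a * d - b * c = 1) :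
    sval1 (twoLetterMat a b c d) ^ 2 ≤ 5 * (a ^ 2 + b ^ 2 + c ^ 2 + d ^ 2) := by
  refine (sval1_sq_le _).trans ?_
  simp only [twoLetterMat, Fin.sum_univ_three]
  simp
  nlinarith [sq_nonneg (a - b), sq_nonneg (c - d), sq_nonneg (a - d), mul_nonneg hb hc,
    sq_nonneg b, sq_nonneg c]

lemma twoLetterMat_det {a b c d : ℝ} (hdet : a * d - b * c = 1) :
    (twoLetterMat a b c d).det = 1 := by
  simp [twoLetterMat, Matrix.det_fin_three]
  linarith

lemma twoLetterMat_inv {a b c d : ℝ} (hdet : a * d - b * c = 1) :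
    (twoLetterMat a b c d)⁻¹ = twoLetterMat d (-b) (-c) a := by
  apply Matrix.inv_eq_right_inv
  ext i j
  fin_cases i <;> fin_cases j <;>
    simp [twoLetterMat, Matrix.mul_apply, Fin.sum_univ_three] <;> linarith

/-- For words in the letters `1,2` only (indices `0,1`) whose last two letters differ:
`σ₂(A_w) ≥ ε` and `‖A_w e₁‖·‖A_w e₂‖ ≥ ε σ₁(A_w)²`. -/
theorem two_letter_words_bounds :
    ∃ ε > (0:ℝ), ∀ w : List (Fin 3), (∀ i ∈ w, i ≠ 2) → LastTwoDiff w →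
      ε ≤ sval2 (Aw w) ∧
      ε * sval1 (Aw w) ^ 2 ≤ enorm3 (Aw w *ᵥ basis3 0) * enorm3 (Aw w *ᵥ basis3 1) := by
  refine ⟨1 / 20, by norm_num, fun w hw hlast => ?_⟩
  obtain ⟨a, b, c, d, ha, hb, hc, hd, hdet, hab, hba, hcd, hdc, hAw⟩ :=
    exists_Aw_eq_of_lastTwoDiff w hw hlast
  rw [hAw]
  have hup := two_letter_sval1_sq_le ha hb hc hd hdet
  constructor
  · have hinv0 := sum_sq_column_le_sval1_sq (twoLetterMat d (-b) (-c) a) 0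
    have hinv1 := sum_sq_column_le_sval1_sq (twoLetterMat d (-b) (-c) a) 1
    have e0 : ∑ i, twoLetterMat d (-b) (-c) a i 0 ^ 2 = d ^ 2 + c ^ 2 := by
      simp [twoLetterMat, Fin.sum_univ_three]
    have e1 : ∑ i, twoLetterMat d (-b) (-c) a i 1 ^ 2 = b ^ 2 + a ^ 2 := by
      simp [twoLetterMat, Fin.sum_univ_three]
    have hcol := sum_sq_column_le_sval1_sq (twoLetterMat a b c d) 2
    have e2 : ∑ i, twoLetterMat a b c d i 2 ^ 2 = (a + b - 1) ^ 2 + (c + d - 1) ^ 2 + 1 := by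
      simp [twoLetterMat, Fin.sum_univ_three]
    rw [sval2, twoLetterMat_det hdet, twoLetterMat_inv hdet, abs_one, one_mul]
    have hs : 0 ≤ sval1 (twoLetterMat a b c d) := norm_nonneg _
    have ht : 0 ≤ sval1 (twoLetterMat d (-b) (-c) a) := norm_nonneg _
    -- The third column has last entry `1`, so the denominator does not vanish.
    have hpos : 0 < sval1 (twoLetterMat a b c d) := by
      refine hs.lt_of_ne' fun h => ?_
      rw [e2, h] at hcol
      nlinarith [sq_nonneg (a + b - 1), sq_nonneg (c + d - 1)]
    rw [le_div_iff₀ hpos]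
    refine abs_le_of_sq_le_sq' ?_ ht |>.2
    nlinarith
  · have h0 : enorm3 (twoLetterMat a b c d *ᵥ basis3 0) = Real.sqrt (a ^ 2 + c ^ 2) := by
      simp [enorm3, basis3, twoLetterMat]
    have h1 : enorm3 (twoLetterMat a b c d *ᵥ basis3 1) = Real.sqrt (b ^ 2 + d ^ 2) := by
      simp [enorm3, basis3, twoLetterMat]
    rw [h0, h1, ← Real.sqrt_mul (by positivity)]
    have hST : a ^ 2 + c ^ 2 ≤ 4 * (b ^ 2 + d ^ 2) := by nlinarith
    have hTS : b ^ 2 + d ^ 2 ≤ 4 * (a ^ 2 + c ^ 2) := by nlinarith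
    have hN : (a ^ 2 + b ^ 2 + c ^ 2 + d ^ 2) / 4
        ≤ Real.sqrt ((a ^ 2 + c ^ 2) * (b ^ 2 + d ^ 2)) := by
      apply Real.le_sqrt_of_sq_le
      have hS : 0 ≤ a ^ 2 + c ^ 2 := by positivity
      have hT : 0 ≤ b ^ 2 + d ^ 2 := by positivity
      nlinarith [mul_le_mul_of_nonneg_left hST hS, mul_le_mul_of_nonneg_left hTS hT]
    linarith
end

section
/- Let s > 1 and suppose the series Σ_w exp(−ψ_s(κ(A_w))), summed over all nonempty words w with letters in {1,2,3}, diverges. Then for every β > 0 there exists x = (x1,x2,x3) ∈ ℝ³ with x1 ≥ x2 ≥ x3 and x1+x2+x3 = 0 satisfying |ψ_s(x) − 1| ≤ β, such that for infinitely many n ∈ ℕ there exists a finite set S of nonempty words with |S| ≥ exp((1−β)n) and ‖κ(A_w)/n − x‖ ≤ β for every w ∈ S. -/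
/-!
Write `g = A_w`, `a = log ‖g‖` and `b = log ‖g⁻¹‖`. Since `det g = 1`, `κ(g) = (a, b - a, -b)`,
and `g⁻¹` is the adjugate of `g`, so `‖g⁻¹‖ ≤ ‖g‖²` (`sval1_inv_le`, from
`‖gu × gv‖ ≤ ‖g‖² ‖u‖ ‖v‖`) and symmetrically `‖g‖ ≤ ‖g⁻¹‖²`. Hence `κ(g)` lies in the closed
Weyl chamber, and `ψ_s(κ(g)) ≥ (s - 1) log ‖g‖`. As `‖A_w‖` grows at least linearly in the length
of `w` (`length_le_sval1`), each sublevel set of `ψ_s ∘ κ` is a finite set of words.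

The rest is a pigeonhole argument. Suppose no `x` works. The set `slab s β` of chamber vectors
with `1 ≤ ψ_s ≤ 1 + β` is bounded, hence covered by finitely many balls of radius `β / 2` centred in
it. For all large `n`, each ball contains `κ(A_w) / n` for fewer than `exp ((1 - β) n)` words `w`,
while every word with `⌊ψ_s(κ(A_w))⌋ = n` has `κ(A_w) / n` in one of the balls. There are therefore
`O(exp ((1 - β) n))` such words, each contributing at most `exp (-n)` to the series, which then
converges by comparison with `∑ exp (-β n)`.
-/

open Matrix MeasureTheory

/-! ### Operator norm, inverse and determinant -/

lemma enorm3_eq (v : Fin 3 → ℝ) : enorm3 v = ‖(WithLp.toLp 2 v : E3)‖ := by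
  simp [enorm3, EuclideanSpace.norm_eq, Fin.sum_univ_three]

lemma enorm3_nonneg (v : Fin 3 → ℝ) : 0 ≤ enorm3 v := Real.sqrt_nonneg _

lemma enorm3_sq (v : Fin 3 → ℝ) : enorm3 v ^ 2 = v 0 ^ 2 + v 1 ^ 2 + v 2 ^ 2 :=
  Real.sq_sqrt (by positivity)

lemma enorm3_mulVec_le (g : M3) (v : Fin 3 → ℝ) : enorm3 (g *ᵥ v) ≤ sval1 g * enorm3 v := by
  rw [enorm3_eq, enorm3_eq]
  exact (Matrix.toEuclideanLin g).toContinuousLinearMap.le_opNorm (WithLp.toLp 2 v)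

lemma sval1_le_of_forall (g : M3) (C : ℝ) (hC : 0 ≤ C)
    (h : ∀ v, enorm3 (g *ᵥ v) ≤ C * enorm3 v) : sval1 g ≤ C := by
  refine ContinuousLinearMap.opNorm_le_bound _ hC fun x => ?_
  have := h (WithLp.ofLp x)
  rw [enorm3_eq, enorm3_eq] at this
  exact this

lemma sval1_nonneg (g : M3) : 0 ≤ sval1 g := norm_nonneg _

lemma sval1_transpose (g : M3) : sval1 gᵀ = sval1 g := by
  have := Matrix.l2_opNorm_conjTranspose (𝕜 := ℝ) g
  rw [Matrix.conjTranspose_eq_transpose_of_trivial] at this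
  exact this

lemma enorm3_cross_le (u v : Fin 3 → ℝ) : enorm3 (u ⨯₃ v) ≤ enorm3 u * enorm3 v := by
  refine le_of_sq_le_sq ?_ (mul_nonneg (enorm3_nonneg _) (enorm3_nonneg _))
  rw [mul_pow, enorm3_sq, enorm3_sq, enorm3_sq]
  simp only [cross_apply, Matrix.cons_val]
  nlinarith [sq_nonneg (u 0 * v 0 + u 1 * v 1 + u 2 * v 2)]

/-- The cofactor matrix acts on cross products. -/
lemma adjugate_transpose_mulVec_cross (g : M3) (u v : Fin 3 → ℝ) :
    (g.adjugate)ᵀ *ᵥ (u ⨯₃ v) = (g *ᵥ u) ⨯₃ (g *ᵥ v) := by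
  ext i
  fin_cases i <;>
    simp [Matrix.adjugate_fin_three, cross_apply, Matrix.mulVec, dotProduct,
      Fin.sum_univ_three] <;> ring

lemma exists_orthogonal_ne_zero (w : Fin 3 → ℝ) :
    ∃ u : Fin 3 → ℝ, 0 < enorm3 u ∧ u 0 * w 0 + u 1 * w 1 + u 2 * w 2 = 0 := by
  by_cases h : w 0 = 0 ∧ w 1 = 0
  · exact ⟨![1, 0, 0], by simp [enorm3], by simp [h.1]⟩
  · refine ⟨![-w 1, w 0, 0], ?_, ?_⟩
    · apply Real.sqrt_pos.2
      simp only [Matrix.cons_val]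
      rcases not_and_or.1 h with h | h
      · have := pow_pos (abs_pos.2 h) 2
        rw [sq_abs] at this
        nlinarith [sq_nonneg (w 1)]
      · have := pow_pos (abs_pos.2 h) 2
        rw [sq_abs] at this
        nlinarith [sq_nonneg (w 0)]
    · simp only [Matrix.cons_val]; ring

/-- A vector `w` is written, up to the factor `|u|²`, as `u × (w × u)` with `u ⟂ w`, and the
cofactor matrix sends this cross product to `gu × g(w × u)`. -/
lemma sval1_adjugate_le (g : M3) : sval1 g.adjugate ≤ sval1 g ^ 2 := by
  rw [← sval1_transpose]
  refine sval1_le_of_forall _ _ (by positivity) fun w => ?_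
  obtain ⟨u, hu, huw⟩ := exists_orthogonal_ne_zero w
  have hcross : u ⨯₃ (w ⨯₃ u) = (enorm3 u ^ 2) • w := by
    rw [enorm3_sq]
    ext i
    fin_cases i <;> simp [cross_apply]
    · linear_combination (-u 0) * huw
    · linear_combination (-u 1) * huw
    · linear_combination (-u 2) * huw
  have h1 := adjugate_transpose_mulVec_cross g u (w ⨯₃ u)
  rw [hcross, Matrix.mulVec_smul] at h1
  have h2 : enorm3 ((enorm3 u ^ 2) • (g.adjugateᵀ *ᵥ w))
      = enorm3 u ^ 2 * enorm3 (g.adjugateᵀ *ᵥ w) := by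
    rw [enorm3_eq, WithLp.toLp_smul, norm_smul, ← enorm3_eq,
      Real.norm_of_nonneg (by positivity)]
  have h3 : enorm3 u ^ 2 * enorm3 (g.adjugateᵀ *ᵥ w)
      ≤ enorm3 u ^ 2 * (sval1 g ^ 2 * enorm3 w) := by
    have hg := sval1_nonneg g
    rw [← h2, h1]
    calc enorm3 ((g *ᵥ u) ⨯₃ (g *ᵥ (w ⨯₃ u)))
        ≤ enorm3 (g *ᵥ u) * enorm3 (g *ᵥ (w ⨯₃ u)) := enorm3_cross_le _ _
      _ ≤ (sval1 g * enorm3 u) * (sval1 g * enorm3 (w ⨯₃ u)) :=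
          mul_le_mul (enorm3_mulVec_le _ _) (enorm3_mulVec_le _ _) (enorm3_nonneg _)
            (mul_nonneg hg hu.le)
      _ ≤ (sval1 g * enorm3 u) * (sval1 g * (enorm3 w * enorm3 u)) := by
          gcongr
          exact enorm3_cross_le _ _
      _ = _ := by ring
  exact le_of_mul_le_mul_left h3 (by positivity)

lemma sval1_inv_le (g : M3) (hg : g.det = 1) : sval1 g⁻¹ ≤ sval1 g ^ 2 := by
  have : g⁻¹ = g.adjugate := by rw [Matrix.inv_def, hg]; simp
  rw [this]
  exact sval1_adjugate_le g

lemma sval1_pos_s13 (g : M3) (hg : g.det = 1) : 0 < sval1 g := by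
  refine (sval1_nonneg g).lt_of_ne fun h => ?_
  have h0 : g = 0 := by
    have h1 := norm_eq_zero.1 h.symm
    simpa using h1
  rw [h0] at hg
  simp at hg

/-! ### The Cartan projection of a word -/

lemma det_Aw (w : List (Fin 3)) : (Aw w).det = 1 := by
  induction w with
  | nil => simp [Aw]
  | cons i w ih =>
    have hA : (A i).det = 1 := by fin_cases i <;> simp [A, Matrix.det_fin_three]
    rw [Aw, List.map_cons, List.prod_cons, Matrix.det_mul, hA, one_mul]
    exact ih

/-- Applying `A i` replaces coordinate `i` by the sum of all coordinates, so the coordinate sum of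
`A_w (1,1,1)` gains at least `2` with every letter. -/
lemma Aw_mulVec_one (w : List (Fin 3)) :
    (∀ i, 1 ≤ (Aw w *ᵥ 1) i) ∧ (w.length : ℝ) ≤ omega3 (Aw w *ᵥ 1) := by
  induction w with
  | nil => simp [Aw, omega3]; norm_num
  | cons i w ih =>
    have h : Aw (i :: w) *ᵥ 1 = A i *ᵥ (Aw w *ᵥ 1) := by
      rw [Matrix.mulVec_mulVec]; simp [Aw]
    rw [h]
    generalize Aw w *ᵥ 1 = v at ih
    obtain ⟨h1, h2⟩ := ih
    have a0 := h1 0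
    have a1 := h1 1
    have a2 := h1 2
    simp only [omega3] at h2
    constructor
    · intro j
      fin_cases i <;> fin_cases j <;>
        simp [A, Matrix.mulVec, dotProduct, Fin.sum_univ_three] <;> linarith
    · fin_cases i <;>
        simp [A, omega3, Matrix.mulVec, dotProduct, Fin.sum_univ_three] <;> linarith

lemma length_le_sval1 (w : List (Fin 3)) : (w.length : ℝ) ≤ 3 * sval1 (Aw w) := by
  refine (Aw_mulVec_one w).2.trans ?_
  have h := enorm3_mulVec_le (Aw w) 1
  have h0 := sval1_nonneg (Aw w)
  generalize Aw w *ᵥ 1 = v at h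
  have h1 : enorm3 1 ^ 2 = 3 := by rw [enorm3_sq]; norm_num
  refine le_of_sq_le_sq ?_ (by positivity)
  have h2 : enorm3 v ^ 2 ≤ (sval1 (Aw w) * enorm3 1) ^ 2 :=
    pow_le_pow_left₀ (enorm3_nonneg _) h 2
  rw [mul_pow, h1, enorm3_sq] at h2
  simp only [omega3]
  nlinarith [sq_nonneg (v 0 - v 1), sq_nonneg (v 0 - v 2), sq_nonneg (v 1 - v 2)]

lemma kappa_eq (g : M3) (hg : g.det = 1) :
    kappa g = ![Real.log (sval1 g), Real.log (sval1 g⁻¹) - Real.log (sval1 g),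
      -Real.log (sval1 g⁻¹)] := by
  have hi : (g⁻¹).det = 1 := by rw [Matrix.det_nonsing_inv, hg]; simp
  rw [kappa, sval2, sval3, hg, abs_one, one_mul, Real.log_inv,
    Real.log_div (sval1_pos_s13 _ hi).ne' (sval1_pos_s13 _ hg).ne']

/-- `κ(A_w)` lies in the closed Weyl chamber of trace-zero vectors. -/
lemma kappa_chamber (w : List (Fin 3)) :
    kappa (Aw w) 1 ≤ kappa (Aw w) 0 ∧ kappa (Aw w) 2 ≤ kappa (Aw w) 1 ∧
      kappa (Aw w) 0 + kappa (Aw w) 1 + kappa (Aw w) 2 = 0 := by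
  have hg := det_Aw w
  have hi : ((Aw w)⁻¹).det = 1 := by rw [Matrix.det_nonsing_inv, hg]; simp
  have hlog : ∀ g : M3, g.det = 1 → Real.log (sval1 g⁻¹) ≤ 2 * Real.log (sval1 g) := by
    intro g hg
    have hgi : (g⁻¹).det = 1 := by rw [Matrix.det_nonsing_inv, hg]; simp
    have := Real.log_le_log (sval1_pos_s13 _ hgi) (sval1_inv_le g hg)
    rwa [Real.log_pow, Nat.cast_ofNat] at this
  have h1 := hlog _ hg
  have h2 := hlog _ hi
  rw [Matrix.nonsing_inv_nonsing_inv _ (by rw [hg]; exact isUnit_one)] at h2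
  rw [kappa_eq _ hg]
  simp only [Matrix.cons_val]
  refine ⟨?_, ?_, ?_⟩ <;> linarith

lemma le_psi_of_chamber {s : ℝ} (hs : 1 < s) {x : Fin 3 → ℝ}
    (h : x 1 ≤ x 0 ∧ x 2 ≤ x 1 ∧ x 0 + x 1 + x 2 = 0) (i : Fin 3) :
    (s - 1) * |x i| ≤ psi s x := by
  obtain ⟨h1, h2, h3⟩ := h
  have : |x i| ≤ x 0 - x 2 := by
    rw [abs_le]
    fin_cases i <;> constructor <;> simp <;> linarith
  have := mul_le_mul_of_nonneg_left this (sub_pos.2 hs).le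
  simp only [psi]
  linarith

lemma finite_psi_le {s : ℝ} (hs : 1 < s) (C : ℝ) :
    {w : {w : List (Fin 3) // w ≠ []} | psi s (kappa (Aw w.1)) ≤ C}.Finite := by
  have hfin := List.finite_length_le (Fin 3) ⌊3 * Real.exp (C / (s - 1))⌋₊
  refine Set.Finite.subset (hfin.preimage Subtype.val_injective.injOn) ?_
  intro w hw
  refine Nat.le_floor ((length_le_sval1 w.1).trans ?_)
  have hk := le_psi_of_chamber hs (kappa_chamber w.1) 0
  have h0 : kappa (Aw w.1) 0 = Real.log (sval1 (Aw w.1)) := rfl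
  have h1 : Real.log (sval1 (Aw w.1)) ≤ C / (s - 1) := by
    rw [le_div_iff₀ (sub_pos.2 hs), mul_comm, ← h0]
    exact (mul_le_mul_of_nonneg_left (le_abs_self _) (sub_pos.2 hs).le).trans (hk.trans hw)
  have := (Real.log_le_iff_le_exp (sval1_pos_s13 _ (det_Aw w.1))).1 h1
  linarith

/-! ### Pigeonhole -/

/-- The vectors of the closed trace-zero Weyl chamber with `1 ≤ ψ_s ≤ 1 + β`. -/
def slab (s β : ℝ) : Set (Fin 3 → ℝ) :=
  {x | (x 1 ≤ x 0 ∧ x 2 ≤ x 1 ∧ x 0 + x 1 + x 2 = 0) ∧ 1 ≤ psi s x ∧ psi s x ≤ 1 + β}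

lemma totallyBounded_slab {s β : ℝ} (hs : 1 < s) (hβ : 0 < β) : TotallyBounded (slab s β) := by
  have hs' := sub_pos.2 hs
  refine (isCompact_closedBall (0 : Fin 3 → ℝ) ((1 + β) / (s - 1))).totallyBounded.subset ?_
  rintro x ⟨hx, -, h2⟩
  rw [mem_closedBall_zero_iff, pi_norm_le_iff_of_nonneg (by positivity)]
  intro i
  rw [Real.norm_eq_abs, le_div_iff₀ hs', mul_comm]
  exact (le_psi_of_chamber hs hx i).trans h2

lemma div_mem_slab {s β : ℝ} {x : Fin 3 → ℝ} {n : ℕ} (hn : 0 < n) (hnβ : 1 / β ≤ n)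
    (hβ : 0 < β) (h : x 1 ≤ x 0 ∧ x 2 ≤ x 1 ∧ x 0 + x 1 + x 2 = 0)
    (h1 : (n : ℝ) ≤ psi s x) (h2 : psi s x ≤ n + 1) :
    (fun i => x i / n) ∈ slab s β := by
  have hn' : (0 : ℝ) < n := by exact_mod_cast hn
  obtain ⟨ha, hb, hc⟩ := h
  have hψ : psi s (fun i => x i / n) = psi s x / n := by simp only [psi]; ring
  refine ⟨⟨by dsimp only; gcongr, by dsimp only; gcongr, ?_⟩, ?_, ?_⟩
  · dsimp only
    rw [← add_div, ← add_div, hc, zero_div]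
  · rw [hψ, le_div_iff₀ hn']
    linarith
  · rw [hψ, div_le_iff₀ hn']
    rw [div_le_iff₀ hβ] at hnβ
    linarith

lemma enorm3_le_of_dist {x y : Fin 3 → ℝ} {β : ℝ} (h : dist x y < β / 2) :
    enorm3 (fun i => x i - y i) ≤ β := by
  have hβ : 0 ≤ β := by linarith [dist_nonneg (x := x) (y := y)]
  have hi : ∀ i, (x i - y i) ^ 2 ≤ (β / 2) ^ 2 := fun i => by
    have := (dist_le_pi_dist x y i).trans h.le
    rw [Real.dist_eq] at this
    exact sq_le_sq.2 (this.trans (le_abs_self _))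
  refine Real.sqrt_le_iff.2 ⟨hβ, ?_⟩
  nlinarith [hi 0, hi 1, hi 2]

/-- A series of terms `exp (-f w)` converges if the level sets of `⌊f⌋` are finite and their
cardinalities grow at an exponential rate less than `1`. -/
lemma summable_exp_neg_of_card {W : Type*} (f : W → ℝ) (hf : ∀ w, 0 ≤ f w)
    (F : ℕ → Finset W) (hF : ∀ n w, w ∈ F n ↔ ⌊f w⌋₊ = n) {β c : ℝ} (hβ : 0 < β) {n₀ : ℕ}
    (hcard : ∀ n, n₀ ≤ n → ((F n).card : ℝ) ≤ c * Real.exp ((1 - β) * n)) :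
    Summable fun w => Real.exp (-f w) := by
  rw [← (Equiv.sigmaFiberEquiv fun w => ⌊f w⌋₊).summable_iff]
  refine (summable_sigma_of_nonneg fun _ => (Real.exp_pos _).le).2 ?_
  have hfin : ∀ n, Finite {w // ⌊f w⌋₊ = n} := fun n =>
    Set.Finite.to_subtype ((F n).finite_toSet.subset fun w hw => (hF n w).2 hw)
  refine ⟨fun n => ?_, ?_⟩
  · have := hfin n
    exact Summable.of_finite
  have hgeo : Summable fun n : ℕ => c * Real.exp (-β) ^ n :=
    (summable_geometric_of_lt_one (Real.exp_pos _).le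
      (Real.exp_lt_one_iff.2 (neg_lt_zero.2 hβ))).mul_left c
  refine Summable.of_norm_bounded_eventually_nat hgeo ?_
  filter_upwards [Filter.eventually_ge_atTop n₀] with n hn
  have hn' := hfin n
  let _ := Fintype.ofFinite {w // ⌊f w⌋₊ = n}
  rw [Real.norm_of_nonneg (tsum_nonneg fun _ => (Real.exp_pos _).le), tsum_fintype]
  have hc : Fintype.card {w // ⌊f w⌋₊ = n} = (F n).card :=
    Fintype.card_of_subtype (F n) (hF n)
  calc _ ≤ ∑ _w : {w // ⌊f w⌋₊ = n}, Real.exp (-(n : ℝ)) := by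
        refine Finset.sum_le_sum fun w _ => Real.exp_le_exp.2 (neg_le_neg ?_)
        have := Nat.floor_le (hf w.1)
        rw [w.2] at this
        exact this
    _ = (F n).card * Real.exp (-(n : ℝ)) := by
        rw [Finset.sum_const, Finset.card_univ, hc, nsmul_eq_mul]
    _ ≤ c * Real.exp ((1 - β) * n) * Real.exp (-(n : ℝ)) := by
        gcongr
        exact hcard n hn
    _ = c * Real.exp (-β) ^ n := by
        rw [mul_assoc, ← Real.exp_add, ← Real.exp_nat_mul]
        ring_nf

/-- If the series `Σ_w exp(−ψ_s(κ(A_w)))` diverges for some `s > 1`, then for every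
`β > 0` there is a suitable `x` in the positive Weyl chamber with `|ψ_s(x) − 1| ≤ β`
and infinitely many `n` admitting an `(n,β,x)`-approximate set of words. -/
theorem approximate_sets_exist (s : ℝ) (hs : 1 < s)
    (hdiv : ¬ Summable fun w : {w : List (Fin 3) // w ≠ []} =>
      Real.exp (-(psi s (kappa (Aw w.1))))) :
    ∀ β > (0:ℝ), ∃ x : Fin 3 → ℝ,
      x 1 ≤ x 0 ∧ x 2 ≤ x 1 ∧ x 0 + x 1 + x 2 = 0 ∧ |psi s x - 1| ≤ β ∧
      {n : ℕ | ∃ S : Finset {w : List (Fin 3) // w ≠ []},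
        Real.exp ((1 - β) * n) ≤ (S.card : ℝ) ∧
        ∀ w ∈ S, enorm3 (fun i => kappa (Aw w.1) i / n - x i) ≤ β}.Infinite := by
  classical
  intro β hβ
  by_contra hcon
  push Not at hcon
  obtain ⟨t, hts, htf, hcover⟩ :=
    Metric.finite_approx_of_totallyBounded (totallyBounded_slab hs hβ) (β / 2) (half_pos hβ)
  set f : {w : List (Fin 3) // w ≠ []} → ℝ := fun w => psi s (kappa (Aw w.1)) with hf
  have hf0 : ∀ w, 0 ≤ f w := fun w =>
    (mul_nonneg (sub_pos.2 hs).le (abs_nonneg _)).trans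
      (le_psi_of_chamber hs (kappa_chamber w.1) 0)
  have hfin : ∀ n : ℕ, {w | ⌊f w⌋₊ = n}.Finite := fun n =>
    (finite_psi_le hs (n + 1)).subset fun w hw => by
      have := Nat.lt_floor_add_one (f w)
      rw [show ⌊f w⌋₊ = n from hw] at this
      exact this.le
  -- The `n` for which some centre `x ∈ t` admits an approximate set form a finite set.
  have hbad : (⋃ x ∈ t, {n : ℕ | ∃ S : Finset {w : List (Fin 3) // w ≠ []},
      Real.exp ((1 - β) * n) ≤ (S.card : ℝ) ∧
      ∀ w ∈ S, enorm3 (fun i => kappa (Aw w.1) i / n - x i) ≤ β}).Finite := by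
    refine htf.biUnion fun x hx => ?_
    obtain ⟨⟨h1, h2, h3⟩, h4, h5⟩ := hts hx
    exact hcon x h1 h2 h3 (abs_le.2 ⟨by linarith, by linarith⟩)
  obtain ⟨N, hN⟩ := hbad.bddAbove
  refine hdiv (summable_exp_neg_of_card f hf0 (fun n => (hfin n).toFinset)
    (fun n w => by simp) (β := β) (c := htf.toFinset.card) hβ
    (n₀ := max (N + 1) ⌈1 / β⌉₊) fun n hn => ?_)
  have hnN : N < n := lt_of_lt_of_le (Nat.lt_succ_self N) ((le_max_left _ _).trans hn)
  have hnβ : 1 / β ≤ n := (Nat.le_ceil _).trans (by exact_mod_cast (le_max_right _ _).trans hn)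
  have hsub : (hfin n).toFinset ⊆ htf.toFinset.biUnion fun x =>
      (hfin n).toFinset.filter fun w =>
        enorm3 (fun i => kappa (Aw w.1) i / n - x i) ≤ β := by
    intro w hw
    have hw' : ⌊f w⌋₊ = n := by simpa using hw
    have hlo := Nat.floor_le (hf0 w)
    have hhi := (Nat.lt_floor_add_one (f w)).le
    rw [hw'] at hlo hhi
    have hmem := hcover (div_mem_slab (by omega) hnβ hβ (kappa_chamber w.1) hlo hhi)
    simp only [Set.mem_iUnion, Metric.mem_ball, exists_prop] at hmem
    obtain ⟨x, hx, hd⟩ := hmem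
    rw [Finset.mem_biUnion]
    exact ⟨x, htf.mem_toFinset.2 hx, Finset.mem_filter.2 ⟨hw, enorm3_le_of_dist hd⟩⟩
  have hcell : ∀ x ∈ htf.toFinset, (((hfin n).toFinset.filter fun w =>
      enorm3 (fun i => kappa (Aw w.1) i / n - x i) ≤ β).card : ℝ)
      ≤ Real.exp ((1 - β) * n) := by
    intro x hx
    by_contra hlt
    refine hnN.not_ge (hN (Set.mem_biUnion (htf.mem_toFinset.1 hx) ?_))
    exact ⟨_, (not_le.1 hlt).le, fun w hw => (Finset.mem_filter.1 hw).2⟩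
  calc ((hfin n).toFinset.card : ℝ)
      ≤ ∑ x ∈ htf.toFinset, (((hfin n).toFinset.filter fun w =>
          enorm3 (fun i => kappa (Aw w.1) i / n - x i) ≤ β).card : ℝ) := by
        exact_mod_cast (Finset.card_le_card hsub).trans Finset.card_biUnion_le
    _ ≤ ∑ _x ∈ htf.toFinset, Real.exp ((1 - β) * n) := Finset.sum_le_sum hcell
    _ = htf.toFinset.card * Real.exp ((1 - β) * n) := by
        rw [Finset.sum_const, nsmul_eq_mul]
end

section
/- The series Σ_w 1/(‖A_w e_1‖ · ‖A_w e_2‖), summed over all words w with letters in {1,2} (only the letters 1 and 2) whose last two letters are different, diverges; equivalently, the total projective length of the arcs A_w I over all such w is infinite, where I is the projective segment between ℝe_1 and ℝe_2. -/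
/-!
For a word `w` in the two letters `0, 1` let `(a, b)` be the coordinate sums of the nonnegative
vectors `A_w e_0` and `A_w e_1`. Appending the letter `0` replaces `(a, b)` by `(a, a + b)`, and
appending `1` replaces it by `(a + b, b)`; the empty word has `(1, 1)`. Running the subtractive
Euclidean algorithm backwards, every coprime pair of positive integers is attained
(`exists_word_of_coprime`).

For a prime `p` and `1 ≤ a < p`, pick a word `u` with sums `(a, p - a)`. Then `u01` ends in two
different letters and has sums `(p + a, p)`, so its term is at least `1 / (2 p ^ 2)`, because the
Euclidean norm is at most the coordinate sum. These words are pairwise distinct, and the `p - 1` of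
them belonging to `p` contribute at least `1 / (4 p)`. The series therefore dominates a multiple of
the sum of the reciprocals of the primes, which diverges.
-/

open Matrix MeasureTheory

/-- A nonnegative vector with coordinate sum `s`. -/
def NonnegSum (v : Fin 3 → ℝ) (s : ℝ) : Prop := (∀ i, 0 ≤ v i) ∧ omega3 v = s

/-- The vectors `A_w e_0` and `A_w e_1` are nonnegative, with coordinate sums `a` and `b`. -/
def HasSums (w : List (Fin 3)) (a b : ℝ) : Prop :=
  NonnegSum (Aw w *ᵥ basis3 0) a ∧ NonnegSum (Aw w *ᵥ basis3 1) b

lemma NonnegSum.add {v v' : Fin 3 → ℝ} {s t : ℝ} (h : NonnegSum v s) (h' : NonnegSum v' t) :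
    NonnegSum (v + v') (s + t) := by
  refine ⟨fun i => add_nonneg (h.1 i) (h'.1 i), ?_⟩
  rw [← h.2, ← h'.2]
  simp only [omega3, Pi.add_apply]
  ring

lemma NonnegSum.enorm3_le {v : Fin 3 → ℝ} {s : ℝ} (h : NonnegSum v s) : enorm3 v ≤ s := by
  have h0 := h.1 0
  have h1 := h.1 1
  have h2 := h.1 2
  rw [← h.2]
  unfold enorm3 omega3
  apply Real.sqrt_le_iff.2
  constructor
  · positivity
  · nlinarith [mul_nonneg h0 h1, mul_nonneg h0 h2, mul_nonneg h1 h2]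

lemma NonnegSum.enorm3_pos {v : Fin 3 → ℝ} {s : ℝ} (h : NonnegSum v s) (hs : 0 < s) :
    0 < enorm3 v := by
  rw [← h.2] at hs
  unfold omega3 at hs
  unfold enorm3
  apply Real.sqrt_pos.2
  by_contra! hc
  have e0 : v 0 = 0 := by nlinarith [sq_nonneg (v 0), sq_nonneg (v 1), sq_nonneg (v 2)]
  have e1 : v 1 = 0 := by nlinarith [sq_nonneg (v 0), sq_nonneg (v 1), sq_nonneg (v 2)]
  have e2 : v 2 = 0 := by nlinarith [sq_nonneg (v 0), sq_nonneg (v 1), sq_nonneg (v 2)]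
  linarith

lemma Aw_append_mulVec (w : List (Fin 3)) (i : Fin 3) (v : Fin 3 → ℝ) :
    Aw (w ++ [i]) *ᵥ v = Aw w *ᵥ (A i *ᵥ v) := by
  simp [Aw, Matrix.mulVec_mulVec]

lemma A_zero_basis_zero : A 0 *ᵥ basis3 0 = basis3 0 := by
  ext i; fin_cases i <;> simp [A, basis3, Matrix.mulVec, dotProduct, Fin.sum_univ_three]

lemma A_zero_basis_one : A 0 *ᵥ basis3 1 = basis3 0 + basis3 1 := by
  ext i; fin_cases i <;> simp [A, basis3, Matrix.mulVec, dotProduct, Fin.sum_univ_three]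

lemma A_one_basis_zero : A 1 *ᵥ basis3 0 = basis3 0 + basis3 1 := by
  ext i; fin_cases i <;> simp [A, basis3, Matrix.mulVec, dotProduct, Fin.sum_univ_three]

lemma A_one_basis_one : A 1 *ᵥ basis3 1 = basis3 1 := by
  ext i; fin_cases i <;> simp [A, basis3, Matrix.mulVec, dotProduct, Fin.sum_univ_three]

lemma hasSums_nil : HasSums [] 1 1 := by
  refine ⟨⟨fun i => ?_, ?_⟩, ⟨fun i => ?_, ?_⟩⟩
  · fin_cases i <;> simp [Aw, basis3]
  · simp [Aw, basis3, omega3]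
  · fin_cases i <;> simp [Aw, basis3]
  · simp [Aw, basis3, omega3]

lemma HasSums.append_zero {w : List (Fin 3)} {a b : ℝ} (h : HasSums w a b) :
    HasSums (w ++ [0]) a (a + b) := by
  refine ⟨?_, ?_⟩
  · rw [Aw_append_mulVec, A_zero_basis_zero]
    exact h.1
  · rw [Aw_append_mulVec, A_zero_basis_one, Matrix.mulVec_add]
    exact h.1.add h.2

lemma HasSums.append_one {w : List (Fin 3)} {a b : ℝ} (h : HasSums w a b) :
    HasSums (w ++ [1]) (a + b) b := by
  refine ⟨?_, ?_⟩
  · rw [Aw_append_mulVec, A_one_basis_zero, Matrix.mulVec_add]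
    exact h.1.add h.2
  · rw [Aw_append_mulVec, A_one_basis_one]
    exact h.2

/-- Every coprime pair of positive integers occurs, by the subtractive Euclidean algorithm: the
last letter records which of the two entries is the larger one. -/
lemma exists_word_of_coprime (n : ℕ) : ∀ a b : ℕ, a + b ≤ n → 0 < a → 0 < b → Nat.Coprime a b →
    ∃ w : List (Fin 3), (∀ i ∈ w, i ≠ 2) ∧ HasSums w a b := by
  induction n with
  | zero => intro a b h ha; omega
  | succ n ih =>
    intro a b h ha hb hab
    rcases lt_trichotomy a b with hlt | rfl | hlt
    · obtain ⟨w, hw, hs⟩ := ih a (b - a) (by omega) ha (by omega)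
        ((Nat.coprime_sub_self_right hlt.le).2 hab)
      refine ⟨w ++ [0], ?_, ?_⟩
      · intro i hi
        rcases List.mem_append.1 hi with hi | hi
        · exact hw i hi
        · simp_all
      · have := hs.append_zero
        rw [Nat.cast_sub hlt.le] at this
        simpa using this
    · have : a = 1 := by simpa using hab
      subst this
      exact ⟨[], by simp, by simpa using hasSums_nil⟩
    · obtain ⟨w, hw, hs⟩ := ih (a - b) b (by omega) (by omega) hb
        ((Nat.coprime_sub_self_left hlt.le).2 hab)
      refine ⟨w ++ [1], ?_, ?_⟩
      · intro i hi
        rcases List.mem_append.1 hi with hi | hi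
        · exact hw i hi
        · simp_all
      · have := hs.append_one
        rw [Nat.cast_sub hlt.le] at this
        simpa using this

/-- The word `u01`, where `u` has sums `(a, p - a)`; the index `k` stands for `a = k + 1`. -/
lemma exists_word_of_prime (x : Σ p : Nat.Primes, Fin ((p : ℕ) - 1)) :
    ∃ w : {w : List (Fin 3) // (∀ i ∈ w, i ≠ 2) ∧ LastTwoDiff w},
      HasSums w.1 ((x.1 : ℕ) + ((x.2 : ℕ) + 1 : ℝ)) (x.1 : ℕ) := by
  obtain ⟨⟨p, hp⟩, ⟨k, hk⟩⟩ := x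
  simp only at hk ⊢
  have hcop : Nat.Coprime (k + 1) (p - (k + 1)) := by
    rw [Nat.coprime_sub_self_right (by omega)]
    exact (Nat.coprime_of_lt_prime (by omega) (by omega) hp).symm
  obtain ⟨u, hu, hs⟩ := exists_word_of_coprime _ (k + 1) (p - (k + 1)) le_rfl
    (by omega) (by omega) hcop
  refine ⟨⟨u ++ [0, 1], ?_, u, 0, 1, rfl, by decide⟩, ?_⟩
  · intro i hi
    rcases List.mem_append.1 hi with hi | hi
    · exact hu i hi
    · rintro rfl
      simp at hi
  · have h := hs.append_zero.append_one
    rw [Nat.cast_sub (by omega), List.append_assoc] at h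
    convert h using 1
    · rfl
    · push_cast; ring
    · ring

/-- The total projective length of the arcs `A_w I`, over words in the letters `1,2`
whose last two letters differ, is infinite. -/
theorem total_arc_length_diverges :
    ¬ Summable (fun w : {w : List (Fin 3) // (∀ i ∈ w, i ≠ 2) ∧ LastTwoDiff w} =>
      1 / (enorm3 (Aw w.1 *ᵥ basis3 0) * enorm3 (Aw w.1 *ᵥ basis3 1))) := by
  intro hsum
  choose W hW using exists_word_of_prime
  -- The second sum of `W x` recovers the prime, and then the first one recovers the index.
  have hinj : Function.Injective W := by
    rintro ⟨p, k⟩ ⟨q, l⟩ h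
    have h1 := hW ⟨p, k⟩
    have h2 := hW ⟨q, l⟩
    rw [h] at h1
    have e2 := h1.2.2.symm.trans h2.2.2
    have e1 := h1.1.2.symm.trans h2.1.2
    simp only at e1 e2
    have hpq : p = q := Subtype.ext (by exact_mod_cast e2)
    subst hpq
    have hkl : k = l := Fin.ext (by
      have : ((k : ℕ) : ℝ) = (l : ℕ) := by linarith
      exact_mod_cast this)
    rw [hkl]
  have hterm : ∀ x : Σ p : Nat.Primes, Fin ((p : ℕ) - 1), 1 / (2 * ((x.1 : ℕ) : ℝ) ^ 2) ≤
      1 / (enorm3 (Aw (W x).1 *ᵥ basis3 0) * enorm3 (Aw (W x).1 *ᵥ basis3 1)) := by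
    intro x
    have h := hW x
    have hp : (0 : ℝ) < (x.1 : ℕ) := by exact_mod_cast x.1.2.pos
    have hk : ((x.2 : ℕ) : ℝ) + 1 ≤ (x.1 : ℕ) := by
      have := x.2.2
      exact_mod_cast (by omega : (x.2 : ℕ) + 1 ≤ (x.1 : ℕ))
    have p1 := h.1.enorm3_pos (by positivity)
    have p2 := h.2.enorm3_pos hp
    apply one_div_le_one_div_of_le (mul_pos p1 p2)
    calc _ ≤ (2 * ((x.1 : ℕ) : ℝ)) * (x.1 : ℕ) :=
          mul_le_mul (h.1.enorm3_le.trans (by linarith)) h.2.enorm3_le p2.le (by positivity)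
      _ = _ := by ring
  have hsig : Summable (fun x : Σ p : Nat.Primes, Fin ((p : ℕ) - 1) =>
      1 / (2 * ((x.1 : ℕ) : ℝ) ^ 2)) :=
    Summable.of_nonneg_of_le (fun x => by positivity) hterm (hsum.comp_injective hinj)
  have hprime : Summable (fun p : Nat.Primes => 1 / ((p : ℕ) : ℝ)) := by
    refine Summable.of_nonneg_of_le (fun p => by positivity) (fun p => ?_) (hsig.sigma.mul_left 4)
    have h2 : (2 : ℝ) ≤ (p : ℕ) := by exact_mod_cast p.2.two_le
    simp only [tsum_fintype, Finset.sum_const, Finset.card_univ, Fintype.card_fin, nsmul_eq_mul]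
    rw [Nat.cast_sub p.2.one_le]
    have hp : (0 : ℝ) < (p : ℕ) := by linarith
    -- This is `p ≤ 2 (p - 1)` after clearing denominators.
    have : 4 * ((((p : ℕ) : ℝ) - (1 : ℕ)) * (1 / (2 * ((p : ℕ) : ℝ) ^ 2))) - 1 / ((p : ℕ) : ℝ)
        = (((p : ℕ) : ℝ) - 2) / ((p : ℕ) : ℝ) ^ 2 := by
      field_simp
      push_cast
      ring
    have h3 : 0 ≤ (((p : ℕ) : ℝ) - 2) / ((p : ℕ) : ℝ) ^ 2 :=
      div_nonneg (by linarith) (by positivity)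
    linarith
  exact Nat.Primes.not_summable_one_div hprime
end

section
/- The Rauzy gasket X contains the boundary of the simplex Δ̃, i.e. every point x ∈ Δ̃ with at least one coordinate equal to 0 belongs to X; consequently dimH X ≥ 1. -/
/-!
A nonnegative vector with `v k = 0` can be peeled forever: if `{i, j, k} = {0, 1, 2}` and
`v j ≤ v i`, then `v = A i *ᵥ u`, where `u` is `v` with its `i`-th entry replaced by
`v i - v j`, so `u` is again nonnegative with `u k = 0` (`exists_step`). Iterating this
subtractive Euclidean algorithm writes `v` as `Aw w *ᵥ u` with `w` of any prescribed length
(`exists_word`); normalising `u` puts a boundary point of the simplex in the gasket.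

For the dimension, the coordinate projection `x ↦ x 0` is Lipschitz and maps the side
`x 2 = 0` of the simplex onto `[0, 1]`, which has Hausdorff dimension `1`.
-/

open Matrix MeasureTheory

/-- One backward step of the subtractive Euclidean algorithm on a side of the positive cone. -/
lemma exists_step (v : Fin 3 → ℝ) (hv : ∀ i, 0 ≤ v i) (h0 : ∃ k, v k = 0) :
    ∃ (i : Fin 3) (u : Fin 3 → ℝ), (∀ i, 0 ≤ u i) ∧ (∃ k, u k = 0) ∧ A i *ᵥ u = v := by
  obtain ⟨k, hk⟩ := h0
  have a0 := hv 0
  have a1 := hv 1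
  have a2 := hv 2
  fin_cases k <;> simp at hk
  · rcases le_total (v 1) (v 2) with h | h
    · refine ⟨2, ![0, v 1, v 2 - v 1], ?_, ⟨0, rfl⟩, ?_⟩
      · intro i; fin_cases i <;> simp <;> linarith
      · ext i; fin_cases i <;> simp [A, mulVec, dotProduct, Fin.sum_univ_three, hk]
    · refine ⟨1, ![0, v 1 - v 2, v 2], ?_, ⟨0, rfl⟩, ?_⟩
      · intro i; fin_cases i <;> simp <;> linarith
      · ext i; fin_cases i <;> simp [A, mulVec, dotProduct, Fin.sum_univ_three, hk]
  · rcases le_total (v 0) (v 2) with h | h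
    · refine ⟨2, ![v 0, 0, v 2 - v 0], ?_, ⟨1, rfl⟩, ?_⟩
      · intro i; fin_cases i <;> simp <;> linarith
      · ext i; fin_cases i <;> simp [A, mulVec, dotProduct, Fin.sum_univ_three, hk]
    · refine ⟨0, ![v 0 - v 2, 0, v 2], ?_, ⟨1, rfl⟩, ?_⟩
      · intro i; fin_cases i <;> simp <;> linarith
      · ext i; fin_cases i <;> simp [A, mulVec, dotProduct, Fin.sum_univ_three, hk]
  · rcases le_total (v 0) (v 1) with h | h
    · refine ⟨1, ![v 0, v 1 - v 0, 0], ?_, ⟨2, rfl⟩, ?_⟩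
      · intro i; fin_cases i <;> simp <;> linarith
      · ext i; fin_cases i <;> simp [A, mulVec, dotProduct, Fin.sum_univ_three, hk]
    · refine ⟨0, ![v 0 - v 1, v 1, 0], ?_, ⟨2, rfl⟩, ?_⟩
      · intro i; fin_cases i <;> simp <;> linarith
      · ext i; fin_cases i <;> simp [A, mulVec, dotProduct, Fin.sum_univ_three, hk]

lemma exists_word (n : ℕ) (v : Fin 3 → ℝ) (hv : ∀ i, 0 ≤ v i) (h0 : ∃ k, v k = 0) :
    ∃ (w : List (Fin 3)) (u : Fin 3 → ℝ),
      w.length = n ∧ (∀ i, 0 ≤ u i) ∧ Aw w *ᵥ u = v := by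
  induction n generalizing v with
  | zero => exact ⟨[], v, rfl, hv, by simp [Aw]⟩
  | succ n ih =>
    obtain ⟨i, v', hv', h0', rfl⟩ := exists_step v hv h0
    obtain ⟨w, u, hw, hu, rfl⟩ := ih v' hv' h0'
    exact ⟨i :: w, u, by simp [hw], hu, by simp [Aw, mulVec_mulVec]⟩

lemma omega3_smul (c : ℝ) (v : Fin 3 → ℝ) : omega3 (c • v) = c * omega3 v := by
  simp [omega3]; ring

lemma boundary_mem_gasket (x : E3) (hx : x ∈ simplex) (h0 : ∃ k, ofE x k = 0) :
    x ∈ gasket := by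
  obtain ⟨hpos, hsum⟩ := hx
  refine Set.mem_iInter.2 fun n => ?_
  obtain ⟨w, u, hw, hu, hwu⟩ := exists_word (n + 1) (ofE x) hpos h0
  have hu0 : u ≠ 0 := by
    rintro rfl
    rw [mulVec_zero] at hwu
    rw [← hwu] at hsum
    simp [omega3] at hsum
  have hω : 0 < omega3 u := by
    have b0 := hu 0
    have b1 := hu 1
    have b2 := hu 2
    refine lt_of_le_of_ne (by unfold omega3; linarith) fun h => hu0 ?_
    unfold omega3 at h
    ext i
    fin_cases i <;> simp <;> linarith
  refine Set.mem_biUnion (x := w) hw ⟨toE ((omega3 u)⁻¹ • u), ⟨fun i => ?_, ?_⟩, ?_⟩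
  · exact mul_nonneg (inv_nonneg.2 hω.le) (hu i)
  · change omega3 ((omega3 u)⁻¹ • u) = 1
    rw [omega3_smul, inv_mul_cancel₀ hω.ne']
  · change toE ((omega3 (Aw w *ᵥ ((omega3 u)⁻¹ • u)))⁻¹ • (Aw w *ᵥ ((omega3 u)⁻¹ • u))) = x
    rw [mulVec_smul, hwu, omega3_smul, hsum, mul_one, inv_inv, smul_smul,
      mul_inv_cancel₀ hω.ne', one_smul]
    rfl

lemma one_le_dimH_gasket : 1 ≤ dimH gasket := by
  have hlip : LipschitzWith 1 (fun x : E3 => x 0) :=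
    LipschitzWith.of_dist_le_mul fun x y => by
      simpa [dist_eq_norm] using PiLp.norm_apply_le (x - y) 0
  have hsub : Set.Icc (0 : ℝ) 1 ⊆ (fun x : E3 => x 0) '' gasket := by
    rintro t ⟨ht0, ht1⟩
    refine ⟨toE ![t, 1 - t, 0], boundary_mem_gasket _ ⟨fun i => ?_, ?_⟩ ⟨2, rfl⟩, rfl⟩
    · change 0 ≤ (![t, 1 - t, 0] : Fin 3 → ℝ) i
      fin_cases i <;> simp [ht0, ht1]
    · change omega3 ![t, 1 - t, 0] = 1
      simp [omega3]
  calc (1 : ENNReal) = dimH (Set.Icc (0 : ℝ) 1) := by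
        rw [Real.dimH_of_nonempty_interior (by simp [interior_Icc]), Module.finrank_self,
          Nat.cast_one]
    _ ≤ dimH ((fun x : E3 => x 0) '' gasket) := dimH_mono hsub
    _ ≤ dimH gasket := hlip.dimH_image_le gasket

/-- The Rauzy gasket contains the boundary of the simplex; consequently `dimH X ≥ 1`. -/
theorem gasket_contains_boundary_and_dimH_ge_one :
    (∀ x ∈ simplex, (ofE x 0 = 0 ∨ ofE x 1 = 0 ∨ ofE x 2 = 0) → x ∈ gasket) ∧
    1 ≤ dimH gasket := by
  refine ⟨fun x hx h => boundary_mem_gasket x hx ?_, one_le_dimH_gasket⟩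
  rcases h with h | h | h
  exacts [⟨0, h⟩, ⟨1, h⟩, ⟨2, h⟩]
end
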